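/- Let A and B be C*-algebras, let A₁, A₂ be closed two-sided ideals of A and B₁, B₂ be closed two-sided ideals of B. Then (A₁ ⊗̂ B₁) ∩ (A₂ ⊗̂ B₂) = (A₁ ∩ A₂) ⊗̂ (B₁ ∩ B₂) as subsets of A ⊗̂ B. -/

import Mathlib

open scoped TensorProduct
open Pointwise

universe u

noncomputable section

/-- A C⋆-norm on a complex `*`-algebra.  On a matrix algebra over a C⋆-algebra such a
norm is unique, namely the canonical C⋆-norm. -/
structure IsCStarNorm {M : Type*} [NonUnitalRing M] [StarRing M] [Module ℂ M]
    (N : M → ℝ) : Prop where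
  add_le : ∀ x y, N (x + y) ≤ N x + N y
  smul_eq : ∀ (c : ℂ) (x : M), N (c • x) = ‖c‖ * N x
  eq_zero_of : ∀ x, N x = 0 → x = 0
  mul_le : ∀ x y, N (x * y) ≤ N x * N y
  star_mul_self : ∀ x, N (star x * x) = N x * N x

/-- The operator space projective tensor norm `‖·‖_∧` on the algebraic tensor product
`A ⊗ B`, relative to given families of matrix norms on `A` and `B`:
`‖u‖_∧ = inf { ‖α‖ ‖v‖ ‖w‖ ‖β‖ : u = α (v ⊗ w) β }` where `v ∈ M_p(A)`, `w ∈ M_q(B)`,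
`α ∈ M_{1,pq}(ℂ)` and `β ∈ M_{pq,1}(ℂ)` (row and column vectors carrying the Euclidean
norm, which is their norm as scalar matrices). -/
noncomputable def osProjNorm {A B : Type u}
    [AddCommGroup A] [Module ℂ A] [AddCommGroup B] [Module ℂ B]
    (NA : ∀ p : ℕ, Matrix (Fin p) (Fin p) A → ℝ)
    (NB : ∀ q : ℕ, Matrix (Fin q) (Fin q) B → ℝ) (u : A ⊗[ℂ] B) : ℝ :=
  sInf { r : ℝ | ∃ (p q : ℕ) (α : Fin p × Fin q → ℂ) (v : Matrix (Fin p) (Fin p) A)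
      (w : Matrix (Fin q) (Fin q) B) (β : Fin p × Fin q → ℂ),
      u = ∑ ik : Fin p × Fin q, ∑ jl : Fin p × Fin q,
            (α ik * β jl) • (v ik.1 jl.1 ⊗ₜ[ℂ] w ik.2 jl.2) ∧
      r = Real.sqrt (∑ ik, ‖α ik‖ ^ 2) * NA p v * NB q w *
            Real.sqrt (∑ jl, ‖β jl‖ ^ 2) }

/-- `X` is a completion of the algebraic tensor product `A ⊗ B` with respect to the
norm `ν`, via the (necessarily isometric) dense embedding `ι`, and the multiplication and
involution of `X` are the canonical ones induced from `A` and `B`.  Applied with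
`ν = osProjNorm NA NB` (for the canonical matrix C⋆-norms `NA`, `NB`) this characterizes
the Banach `*`-algebra `A ⊗̂ B` (the operator space projective tensor product) up to
isometric `*`-isomorphism; applied with `ν = bsProjNorm` it characterizes the Banach
space projective tensor product `A ⊗_γ B`. -/
structure IsTensorCompletion {A B : Type u} [NonUnitalRing A] [StarRing A] [Module ℂ A]
    [NonUnitalRing B] [StarRing B] [Module ℂ B] (ν : A ⊗[ℂ] B → ℝ)
    (X : Type u) [NonUnitalNormedRing X] [StarRing X] [NormedSpace ℂ X] [CompleteSpace X]
    (ι : A ⊗[ℂ] B →ₗ[ℂ] X) : Prop where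
  norm_eq : ∀ u, ‖ι u‖ = ν u
  dense : DenseRange ι
  mul_tmul : ∀ (a c : A) (b d : B),
    ι (a ⊗ₜ[ℂ] b) * ι (c ⊗ₜ[ℂ] d) = ι ((a * c) ⊗ₜ[ℂ] (b * d))
  star_tmul : ∀ (a : A) (b : B), star (ι (a ⊗ₜ[ℂ] b)) = ι (star a ⊗ₜ[ℂ] star b)

/-- The product ideal `S ⊗̂ T`: the closure in `X` (a completion of `A ⊗ B`) of the span of
elementary tensors `a ⊗ b` with `a ∈ S`, `b ∈ T`. -/
def tensorIdeal {A B : Type u} [NonUnitalRing A] [StarRing A] [Module ℂ A]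
    [NonUnitalRing B] [StarRing B] [Module ℂ B]
    {X : Type u} [NonUnitalNormedRing X] [StarRing X] [NormedSpace ℂ X] [CompleteSpace X]
    (ι : A ⊗[ℂ] B →ₗ[ℂ] X) (S : Set A) (T : Set B) : Set X :=
  closure (ι '' (Submodule.span ℂ (Set.image2 (fun a b => a ⊗ₜ[ℂ] b) S T)))

/-- A closed prime (two-sided) ideal of a Banach algebra: a proper closed two-sided ideal `K`
such that whenever the product of two closed two-sided ideals is contained in `K`, one of them
is contained in `K`. -/
def IsClosedPrimeIdeal {Y : Type u} [NonUnitalNormedRing Y] (K : TwoSidedIdeal Y) : Prop :=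
  IsClosed (K : Set Y) ∧ (K : Set Y) ≠ Set.univ ∧
    ∀ I J : TwoSidedIdeal Y, IsClosed (I : Set Y) → IsClosed (J : Set Y) →
      (∀ x ∈ I, ∀ y ∈ J, x * y ∈ K) → (I : Set Y) ⊆ (K : Set Y) ∨ (J : Set Y) ⊆ (K : Set Y)

/-- An irreducible continuous `*`-representation of a Banach `*`-algebra `Y` on a complex
Hilbert space. -/
structure IrreducibleRepOn (Y : Type u)
    [NonUnitalNormedRing Y] [StarRing Y] [NormedSpace ℂ Y] where
  H : Type u
  [normH : NormedAddCommGroup H]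
  [ipsH : InnerProductSpace ℂ H]
  [csH : CompleteSpace H]
  π : Y →⋆ₙₐ[ℂ] (H →L[ℂ] H)
  continuous : Continuous π
  nonzero : ∃ y, π y ≠ 0
  irreducible : ∀ S : Submodule ℂ H, IsClosed (S : Set H) →
    (∀ y : Y, ∀ v ∈ S, π y v ∈ S) → S = ⊥ ∨ S = ⊤

/-- A primitive ideal: the kernel of an irreducible `*`-representation. -/
def IsPrimitiveIdeal {Y : Type u} [NonUnitalNormedRing Y] [StarRing Y] [NormedSpace ℂ Y]
    (K : TwoSidedIdeal Y) : Prop :=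
  ∃ ρ : IrreducibleRepOn Y, ∀ y, y ∈ K ↔ ρ.π y = 0

/-- A subset `K` of a ring is modular (as an ideal) if there is a relative unit `e`
with `x * e - x ∈ K` and `e * x - x ∈ K` for every `x`. -/
def IsModularIdealSet {Y : Type u} [NonUnitalRing Y] (K : Set Y) : Prop :=
  ∃ e : Y, ∀ x : Y, x * e - x ∈ K ∧ e * x - x ∈ K

/-- A maximal modular (two-sided) ideal: a modular ideal which is proper and maximal among
proper two-sided ideals. -/
def IsMaximalModularIdeal {Y : Type u} [NonUnitalRing Y] (K : TwoSidedIdeal Y) : Prop :=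
  IsModularIdealSet (K : Set Y) ∧ (K : Set Y) ≠ Set.univ ∧
    ∀ L : TwoSidedIdeal Y, (K : Set Y) ⊆ (L : Set Y) →
      (L : Set Y) = (K : Set Y) ∨ (L : Set Y) = Set.univ

/-- The operator norm of a `p × p` matrix of bounded operators on a Hilbert space `H`,
viewed as an operator on the `ℓ²`-direct sum `H ⊕ ⋯ ⊕ H`. -/
noncomputable def opMatrixNorm {H : Type u} [NormedAddCommGroup H] [InnerProductSpace ℂ H]
    {p : ℕ} (T : Matrix (Fin p) (Fin p) (H →L[ℂ] H)) : ℝ :=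
  sSup { r : ℝ | ∃ x : Fin p → H, (∑ i, ‖x i‖ ^ 2) ≤ 1 ∧
      r = Real.sqrt (∑ i, ‖∑ j, (T i j) (x j)‖ ^ 2) }

/-- An operator algebra structure on a Banach algebra `Y`: a bicontinuous algebra
homomorphism of `Y` into the bounded operators on some Hilbert space. -/
structure OperatorAlgebraEmbedding (Y : Type u) [NonUnitalNormedRing Y] [NormedSpace ℂ Y] where
  H : Type u
  [normH : NormedAddCommGroup H]
  [ipsH : InnerProductSpace ℂ H]
  [csH : CompleteSpace H]
  ρ : Y →ₙₐ[ℂ] (H →L[ℂ] H)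
  c : ℝ
  C : ℝ
  c_pos : 0 < c
  lower : ∀ y, c * ‖y‖ ≤ ‖ρ y‖
  upper : ∀ y, ‖ρ y‖ ≤ C * ‖y‖

/-- The matrix norms on `Y` induced by an operator algebra embedding, giving `Y` its
operator space structure: the norm of `v ∈ M_p(Y)` is the operator norm of the matrix
of operators obtained by applying the embedding entrywise. -/
noncomputable def OperatorAlgebraEmbedding.matrixNorm {Y : Type u}
    [NonUnitalNormedRing Y] [NormedSpace ℂ Y] (e : OperatorAlgebraEmbedding Y)
    (p : ℕ) (v : Matrix (Fin p) (Fin p) Y) : ℝ :=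
  letI := e.normH; letI := e.ipsH
  opMatrixNorm (v.map e.ρ)

/-- The Banach space projective tensor norm `‖·‖_γ` on the algebraic tensor product. -/
noncomputable def bsProjNorm {A B : Type u} [NonUnitalNormedRing A] [NormedSpace ℂ A]
    [NonUnitalNormedRing B] [NormedSpace ℂ B] (u : A ⊗[ℂ] B) : ℝ :=
  sInf { r : ℝ | ∃ (n : ℕ) (a : Fin n → A) (b : Fin n → B),
      u = ∑ i, a i ⊗ₜ[ℂ] b i ∧ r = ∑ i, ‖a i‖ * ‖b i‖ }

/-- A C⋆-algebra `A` is subhomogeneous if there is `n : ℕ` bounding the (finite)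
dimensions of all its irreducible `*`-representations. -/
def IsSubhomogeneous (A : Type u) [NonUnitalCStarAlgebra A] : Prop :=
  ∃ n : ℕ, ∀ ρ : IrreducibleRepOn A,
    letI := ρ.normH
    letI := ρ.ipsH
    FiniteDimensional ℂ ρ.H ∧ Module.finrank ℂ ρ.H ≤ n

/-!
An ideal `I` of a C⋆-algebra contains a contractive net `e` with `a e → a` for all `a ∈ I`. The
projective norm is at most the product norm on elementary tensors, because the norms on `1 × 1`
matrices are C⋆-norms and hence at most the given norm. Therefore, if `e` and `f` are such nets for
`A₁` and `B₁`, the elements `e ⊗ f` are uniformly bounded and `z (e ⊗ f) → z` for all `z` in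
`A₁ ⊗̂ B₁`. If `z` also lies in `A₂ ⊗̂ B₂`, then each `z (e ⊗ f)` lies in
`(A₁ ∩ A₂) ⊗̂ (B₁ ∩ B₂)`, since `A₂ e ⊆ A₁ ∩ A₂` and `B₂ f ⊆ B₁ ∩ B₂`; hence so does the limit `z`.
-/

open Filter Topology
open scoped NNReal CStarAlgebra

section CStarNorm

theorem exists_unitary_eq_smul_add_star {A : Type*} [CStarAlgebra A] {h : A}
    (hh : IsSelfAdjoint h) :
    ∃ u : unitary A, h = ((‖h‖ / 2 : ℝ) : ℂ) • ((u : A) + star (u : A)) := by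
  let _ := CStarAlgebra.spectralOrder A
  have _ := CStarAlgebra.spectralOrderedRing A
  let k : selfAdjoint A := ⟨‖h‖⁻¹ • h, (IsSelfAdjoint.all _).smul hh⟩
  have hk : ‖k‖ ≤ 1 := by
    simpa [k, norm_smul] using inv_mul_le_one (a := ‖h‖)
  refine ⟨selfAdjoint.unitarySelfAddISMul k hk, ?_⟩
  have hu := realPart_apply_coe (selfAdjoint.unitarySelfAddISMul k hk : A)
  rw [selfAdjoint.realPart_unitarySelfAddISMul] at hu
  calc h = ‖h‖ • (k : A) := (NormedSpace.norm_smul_normalize h).symm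
    _ = _ := by rw [hu, smul_smul, ← div_eq_mul_inv, Complex.coe_smul]

theorem exists_inr_eq_mul_inr {R A : Type*} [Semiring R] [NonUnitalNonAssocSemiring A]
    [Module R A] (u : Unitization R A) (x : A) : ∃ y : A, (y : Unitization R A) = u * x :=
  ⟨u.fst • x + u.snd * x, by ext <;> simp⟩

namespace IsCStarNorm

section

variable {M : Type*} [NonUnitalRing M] [StarRing M] [Module ℂ M] {N : M → ℝ}

theorem nonneg (hN : IsCStarNorm N) (x : M) : 0 ≤ N x := by
  have hzero : N 0 = 0 := by simpa using hN.smul_eq 0 0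
  have hneg : N (-x) = N x := by simpa using hN.smul_eq (-1) x
  have htri := hN.add_le x (-x)
  rw [add_neg_cancel, hzero, hneg] at htri
  linarith

theorem eq_of_star_mul_self_eq (hN : IsCStarNorm N) {x y : M} (h : star y * y = star x * x) :
    N y = N x := by
  rw [← mul_self_inj (hN.nonneg y) (hN.nonneg x), ← hN.star_mul_self, ← hN.star_mul_self, h]

theorem comp_matrix_of_unique {ι : Type*} [Fintype ι] [Unique ι] {N : Matrix ι ι M → ℝ}
    (hN : IsCStarNorm N) : IsCStarNorm fun a : M => N (Matrix.of fun _ _ => a) where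
  add_le x y := hN.add_le _ _
  smul_eq c x := hN.smul_eq c _
  eq_zero_of x hx := congrFun₂ (hN.eq_zero_of _ hx) default default
  mul_le x y := by
    convert hN.mul_le (Matrix.of fun _ _ => x) (Matrix.of fun _ _ => y) using 2
    ext
    simp [Matrix.mul_apply]
  star_mul_self x := by
    convert hN.star_mul_self (Matrix.of fun _ _ => x) using 2
    ext
    simp [Matrix.mul_apply, Matrix.star_apply]

end

variable {A : Type*} [NonUnitalCStarAlgebra A] {N : A → ℝ}

theorem eq_of_inr_eq_unitary_mul (hN : IsCStarNorm N) (u : unitary A⁺¹) {x y : A}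
    (hy : (y : A⁺¹) = u * x) : N y = N x := by
  refine hN.eq_of_star_mul_self_eq (Unitization.inr_injective (R := ℂ) ?_)
  rw [Unitization.inr_mul, Unitization.inr_mul, Unitization.inr_star, Unitization.inr_star, hy,
    star_mul, mul_assoc, ← mul_assoc (star (u : A⁺¹)), Unitary.coe_star_mul_self, one_mul]

theorem mul_le_norm_mul (hN : IsCStarNorm N) {h : A} (hh : IsSelfAdjoint h) (x : A) :
    N (h * x) ≤ ‖h‖ * N x := by
  obtain ⟨u, hu⟩ := exists_unitary_eq_smul_add_star (hh.inr ℂ)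
  obtain ⟨y, hy⟩ := exists_inr_eq_mul_inr (u : A⁺¹) x
  obtain ⟨z, hz⟩ := exists_inr_eq_mul_inr (star (u : A⁺¹)) x
  have hmul : h * x = ((‖h‖ / 2 : ℝ) : ℂ) • (y + z) := by
    apply Unitization.inr_injective (R := ℂ)
    rw [Unitization.inr_mul, hu, Unitization.inr_smul, Unitization.inr_add, hy, hz,
      smul_mul_assoc, add_mul, Unitization.norm_inr]
  calc N (h * x) = ‖h‖ / 2 * N (y + z) := by
        rw [hmul, hN.smul_eq, Complex.norm_of_nonneg (by positivity)]
    _ ≤ ‖h‖ / 2 * (N y + N z) := by gcongr; exact hN.add_le y z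
    _ = ‖h‖ * N x := by
        rw [hN.eq_of_inr_eq_unitary_mul u hy, hN.eq_of_inr_eq_unitary_mul (star u) hz]
        ring

theorem le_norm_of_isSelfAdjoint (hN : IsCStarNorm N) {h : A} (hh : IsSelfAdjoint h) :
    N h ≤ ‖h‖ := by
  have hsq : N h * N h ≤ ‖h‖ * N h := by
    calc N h * N h = N (h * h) := by rw [← hN.star_mul_self, hh.star_eq]
      _ ≤ ‖h‖ * N h := hN.mul_le_norm_mul hh h
  rcases (hN.nonneg h).eq_or_lt with hzero | hpos
  · exact hzero ▸ norm_nonneg h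
  · exact le_of_mul_le_mul_right hsq hpos

theorem le_norm (hN : IsCStarNorm N) (x : A) : N x ≤ ‖x‖ := by
  refine abs_le_of_sq_le_sq' ?_ (norm_nonneg x) |>.2
  rw [sq, sq, ← hN.star_mul_self, ← CStarRing.norm_star_mul_self]
  exact hN.le_norm_of_isSelfAdjoint (.star_mul_self x)

end IsCStarNorm

theorem osProjNorm_tmul_le {A B : Type u} [NonUnitalCStarAlgebra A] [NonUnitalCStarAlgebra B]
    {NA : ∀ p : ℕ, Matrix (Fin p) (Fin p) A → ℝ} {NB : ∀ q : ℕ, Matrix (Fin q) (Fin q) B → ℝ}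
    (hNA : ∀ p, IsCStarNorm (NA p)) (hNB : ∀ q, IsCStarNorm (NB q)) (a : A) (b : B) :
    osProjNorm NA NB (a ⊗ₜ[ℂ] b) ≤ ‖a‖ * ‖b‖ := by
  have hNA_le := (hNA 1).comp_matrix_of_unique.le_norm a
  have hNB_le := (hNB 1).comp_matrix_of_unique.le_norm b
  calc osProjNorm NA NB (a ⊗ₜ[ℂ] b)
      ≤ NA 1 (Matrix.of fun _ _ => a) * NB 1 (Matrix.of fun _ _ => b) := by
        refine csInf_le ⟨0, ?_⟩ ⟨1, 1, fun _ => 1, Matrix.of fun _ _ => a,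
          Matrix.of fun _ _ => b, fun _ => 1, by simp, by simp⟩
        rintro r ⟨p, q, α, v, w, β, -, rfl⟩
        have hv := (hNA p).nonneg v
        have hw := (hNB q).nonneg w
        positivity
    _ ≤ ‖a‖ * ‖b‖ := mul_le_mul hNA_le hNB_le ((hNB 1).nonneg _) (norm_nonneg a)

end CStarNorm

section ApproximateUnit

variable {A : Type*} [NonUnitalCStarAlgebra A] [PartialOrder A] [StarOrderedRing A]

/-- The element `c (1 + c)⁻¹` attached to a positive `c`, from which bounded approximate units are
built. It is written as `1 - (1 + c)⁻¹` over `ℝ≥0`, where the function vanishes at `0`, so that the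
nonunital functional calculus applies; it is `0` if `c` is not positive. -/
def selfDivOneAdd (c : A) : A := cfcₙ (fun x : ℝ≥0 => 1 - (1 + x)⁻¹) c

theorem selfDivOneAdd_nonneg (c : A) : 0 ≤ selfDivOneAdd c := cfcₙ_nonneg_of_predicate

theorem norm_selfDivOneAdd_le_one (c : A) : ‖selfDivOneAdd c‖ ≤ 1 :=
  (norm_cfcₙ_one_sub_one_add_inv_lt_one c).le

theorem mul_selfDivOneAdd {c : A} (hc : 0 ≤ c) : c * selfDivOneAdd c = c - selfDivOneAdd c := by
  let f : ℝ≥0 → ℝ≥0 := fun x => 1 - (1 + x)⁻¹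
  have hf : Continuous f := by fun_prop (disch := intro _; positivity)
  have hf_eq (x : ℝ≥0) : x * f x + f x = x := by
    rw [← add_one_mul, mul_tsub, mul_one, add_comm, mul_inv_cancel₀ (by positivity),
      add_tsub_cancel_left]
  rw [eq_sub_iff_add_eq]
  calc c * selfDivOneAdd c + selfDivOneAdd c = cfcₙ (fun x => x * f x + f x) c := by
        rw [cfcₙ_add _ f c, cfcₙ_mul (fun x => x) f c, cfcₙ_id' ℝ≥0 c, selfDivOneAdd]
    _ = c := by simp only [hf_eq, cfcₙ_id' ℝ≥0 c]

theorem selfDivOneAdd_mem (I : TwoSidedIdeal A) {c : A} (hc : 0 ≤ c) (hcI : c ∈ I) :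
    selfDivOneAdd c ∈ I := by
  rw [← sub_sub_cancel c (selfDivOneAdd c), ← mul_selfDivOneAdd hc]
  exact I.sub_mem hcI (I.mul_mem_right _ _ hcI)

theorem nsmul_star_mul_self_sub_mul_selfDivOneAdd_le {a c : A} {n : ℕ}
    (h : n • (star a * a) ≤ c) :
    n • (star (a - a * selfDivOneAdd c) * (a - a * selfDivOneAdd c)) ≤
      selfDivOneAdd c - selfDivOneAdd c * selfDivOneAdd c := by
  set e := selfDivOneAdd c
  have hsq : 0 ≤ n • (star a * a) := nsmul_nonneg (star_mul_self_nonneg a) n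
  have hc : 0 ≤ c := hsq.trans h
  have he : IsSelfAdjoint e := .of_nonneg (selfDivOneAdd_nonneg c)
  have he_inr : star (e : A⁺¹) = e := he.inr ℂ
  have hce : (c : A⁺¹) * (1 - e) = e := by
    rw [mul_sub, mul_one, ← Unitization.inr_mul, mul_selfDivOneAdd hc, Unitization.inr_sub,
      sub_sub_cancel]
  have he_sq : IsSelfAdjoint (e * e) := by
    simpa only [he.star_eq] using IsSelfAdjoint.star_mul_self e
  rw [← Unitization.inr_le_iff _ _ (.of_nonneg (nsmul_nonneg (star_mul_self_nonneg _) n))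
    (he.sub he_sq)]
  calc ((n • (star (a - a * e) * (a - a * e)) : A) : A⁺¹)
      = star (1 - (e : A⁺¹)) * ((n • (star a * a) : A) : A⁺¹) * (1 - e) := by
        simp only [Unitization.inr_mul, Unitization.inr_sub, Unitization.inr_smul,
          Unitization.inr_star, star_sub, star_mul, star_one, he_inr, smul_mul_assoc, mul_smul_comm]
        noncomm_ring
    _ ≤ star (1 - (e : A⁺¹)) * c * (1 - e) := by
        refine star_left_conjugate_le_conjugate ?_ _
        exact (Unitization.inr_le_iff _ _ (.of_nonneg hsq) (.of_nonneg hc)).2 h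
    _ = ((e - e * e : A) : A⁺¹) := by
        rw [mul_assoc, hce, star_sub, star_one, he_inr, sub_mul, one_mul, Unitization.inr_sub,
          Unitization.inr_mul]

theorem natCast_mul_norm_sub_mul_selfDivOneAdd_sq_le {a c : A} {n : ℕ}
    (h : n • (star a * a) ≤ c) : n * ‖a - a * selfDivOneAdd c‖ ^ 2 ≤ 2 := by
  have hpos : 0 ≤ n • (star (a - a * selfDivOneAdd c) * (a - a * selfDivOneAdd c)) :=
    nsmul_nonneg (star_mul_self_nonneg _) n
  have hle := CStarAlgebra.norm_le_norm_of_nonneg_of_le hpos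
    (nsmul_star_mul_self_sub_mul_selfDivOneAdd_le h)
  set e := selfDivOneAdd c
  have he : ‖e‖ ≤ 1 := norm_selfDivOneAdd_le_one c
  calc n * ‖a - a * e‖ ^ 2 = ‖n • (star (a - a * e) * (a - a * e))‖ := by
        rw [RCLike.norm_nsmul ℂ, CStarRing.norm_star_mul_self, sq, nsmul_eq_mul]
    _ ≤ ‖e - e * e‖ := hle
    _ ≤ ‖e‖ + ‖e‖ * ‖e‖ := (norm_sub_le _ _).trans (by gcongr; exact norm_mul_le e e)
    _ ≤ 1 + 1 * 1 := by gcongr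
    _ = 2 := by norm_num

/-- The net `e_(F, n) = n b (1 + n b)⁻¹`, `b = ∑ a ∈ F, a* a`, indexed by the finite subsets `F`
of the ideal `I` and `n : ℕ`; it is a contractive right approximate unit of `I`.
Taking `n` natural keeps `n b` in `I` even if `I` is not a complex subspace. -/
def idealApproximateUnit (I : TwoSidedIdeal A) (i : Finset I × ℕ) : A :=
  selfDivOneAdd (i.2 • ∑ a ∈ i.1, star (a : A) * a)

variable (I : TwoSidedIdeal A)

theorem norm_idealApproximateUnit_le_one (i : Finset I × ℕ) : ‖idealApproximateUnit I i‖ ≤ 1 :=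
  norm_selfDivOneAdd_le_one _

theorem idealApproximateUnit_mem (i : Finset I × ℕ) : idealApproximateUnit I i ∈ I :=
  selfDivOneAdd_mem I (nsmul_nonneg (Finset.sum_nonneg fun _ _ => star_mul_self_nonneg _) _)
    (nsmul_mem (sum_mem fun a _ => I.mul_mem_left _ _ a.2) _)

theorem tendsto_mul_idealApproximateUnit {a : A} (ha : a ∈ I) :
    Tendsto (fun i => a * idealApproximateUnit I i) atTop (𝓝 a) := by
  have hbound : ∀ᶠ i : Finset I × ℕ in atTop,
      ‖a * idealApproximateUnit I i - a‖ ^ 2 ≤ 2 / i.2 := by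
    filter_upwards [eventually_ge_atTop ({⟨a, ha⟩}, 1)] with i hi
    have hsum : star a * a ≤ ∑ x ∈ i.1, star (x : A) * x :=
      Finset.single_le_sum (f := fun x : I => star (x : A) * x)
        (fun x _ => star_mul_self_nonneg _) (Finset.singleton_subset_iff.1 hi.1)
    rw [norm_sub_rev, le_div_iff₀' (by exact_mod_cast hi.2)]
    exact natCast_mul_norm_sub_mul_selfDivOneAdd_sq_le (nsmul_le_nsmul_right hsum i.2)
  have hlim : Tendsto (fun i : Finset I × ℕ => (2 : ℝ) / i.2) atTop (𝓝 0) := by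
    classical
    exact (tendsto_const_div_atTop_nhds_zero_nat 2).comp
      (prod_atTop_atTop_eq (α := Finset I) (β := ℕ) ▸ tendsto_snd)
  rw [tendsto_iff_norm_sub_tendsto_zero]
  have hsq := squeeze_zero' (.of_forall fun _ => sq_nonneg _) hbound hlim
  simpa using hsq.sqrt

end ApproximateUnit

theorem isClosed_setOf_tendsto_mul {X κ : Type*} [NonUnitalSeminormedRing X] {l : Filter κ}
    {w : κ → X} {C : ℝ≥0} (hw : ∀ k, ‖w k‖ ≤ C) :
    IsClosed {x | Tendsto (fun k => x * w k) l (𝓝 x)} := by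
  have hlip (k : κ) : LipschitzWith C fun x => x * w k := .of_dist_le_mul fun x y => by
    rw [dist_eq_norm, dist_eq_norm, ← sub_mul, mul_comm]
    exact (norm_mul_le _ _).trans (by gcongr; exact hw k)
  have hequi := LipschitzWith.uniformEquicontinuous (fun k x => x * w k) C hlip
  exact hequi.equicontinuous.isClosed_setOfPred_tendsto continuous_id

section TensorIdeal

variable {A B X : Type u} [NonUnitalNormedRing X] [StarRing X] [NormedSpace ℂ X] [CompleteSpace X]

section Algebraic

variable [NonUnitalRing A] [StarRing A] [Module ℂ A] [NonUnitalRing B] [StarRing B] [Module ℂ B]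

theorem tensorIdeal_mono (ι : A ⊗[ℂ] B →ₗ[ℂ] X) {S S' : Set A} {T T' : Set B} (hS : S ⊆ S')
    (hT : T ⊆ T') : tensorIdeal ι S T ⊆ tensorIdeal ι S' T' :=
  closure_mono (Set.image_mono (Submodule.span_mono (Set.image2_subset hS hT)))

theorem tensorIdeal_subset {ι : A ⊗[ℂ] B →ₗ[ℂ] X} {S : Set A} {T : Set B} {V : Submodule ℂ X}
    (hV : IsClosed (V : Set X)) (h : ∀ a ∈ S, ∀ b ∈ T, ι (a ⊗ₜ b) ∈ V) : tensorIdeal ι S T ⊆ V :=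
  closure_minimal (Set.image_subset_iff.2 <| Submodule.span_le (p := V.comap ι).2 <|
    Set.image2_subset_iff.2 h) hV

theorem mul_tmul_mem_tensorIdeal [IsScalarTower ℂ X X] {ν : A ⊗[ℂ] B → ℝ} {ι : A ⊗[ℂ] B →ₗ[ℂ] X}
    (hX : IsTensorCompletion ν X ι) {S S' : Set A} {T T' : Set B} {e : A} {f : B}
    (hS : ∀ a ∈ S, a * e ∈ S') (hT : ∀ b ∈ T, b * f ∈ T') {z : X} (hz : z ∈ tensorIdeal ι S T) :
    z * ι (e ⊗ₜ f) ∈ tensorIdeal ι S' T' := by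
  let I' : Submodule ℂ X :=
    ((Submodule.span ℂ (Set.image2 (· ⊗ₜ[ℂ] ·) S' T')).map ι).topologicalClosure
  let V : Submodule ℂ X := I'.comap (LinearMap.mulRight ℂ (ι (e ⊗ₜ f)))
  have hV : IsClosed (V : Set X) := isClosed_closure.preimage (continuous_mul_const _)
  refine tensorIdeal_subset hV (fun a ha b hb => ?_) hz
  refine subset_closure ⟨_, Submodule.subset_span ⟨a * e, hS a ha, b * f, hT b hb, rfl⟩, ?_⟩
  exact (hX.mul_tmul a e b f).symm

end Algebraic

theorem tendsto_mul_tmul_of_mem_tensorIdeal [NonUnitalNormedRing A] [StarRing A] [NormedSpace ℂ A]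
    [NonUnitalNormedRing B] [StarRing B] [NormedSpace ℂ B] [IsScalarTower ℂ X X]
    {ν : A ⊗[ℂ] B → ℝ} {ι : A ⊗[ℂ] B →ₗ[ℂ] X} (hX : IsTensorCompletion ν X ι) {C : ℝ≥0}
    (hν : ∀ a b, ν (a ⊗ₜ b) ≤ C * ‖a‖ * ‖b‖) {S : Set A} {T : Set B} {κ κ' : Type*}
    {l : Filter κ} {l' : Filter κ'} {e : κ → A} {f : κ' → B}
    (he : ∀ k, ‖e k‖ ≤ 1) (hf : ∀ k, ‖f k‖ ≤ 1)
    (hS : ∀ a ∈ S, Tendsto (fun k => a * e k) l (𝓝 a))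
    (hT : ∀ b ∈ T, Tendsto (fun k => b * f k) l' (𝓝 b)) {z : X} (hz : z ∈ tensorIdeal ι S T) :
    Tendsto (fun p : κ × κ' => z * ι (e p.1 ⊗ₜ f p.2)) (l ×ˢ l') (𝓝 z) := by
  have hι : ∀ a b, ‖ι (a ⊗ₜ b)‖ ≤ C * ‖a‖ * ‖b‖ := fun a b => hX.norm_eq (a ⊗ₜ b) ▸ hν a b
  let Φ : A →L[ℂ] B →L[ℂ] X := ((TensorProduct.mk ℂ A B).compr₂ ι).mkContinuous₂ C hι
  let V : Submodule ℂ X :=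
    { carrier := {x | Tendsto (fun p : κ × κ' => x * ι (e p.1 ⊗ₜ f p.2)) (l ×ˢ l') (𝓝 x)}
      add_mem' := fun hx hy => by simpa only [Set.mem_ofPred_eq, add_mul] using hx.add hy
      zero_mem' := by simpa using tendsto_const_nhds
      smul_mem' := fun c x hx => by
        simpa only [Set.mem_ofPred_eq, smul_mul_assoc] using hx.const_smul c }
  have hV : IsClosed (V : Set X) := isClosed_setOf_tendsto_mul fun p =>
    (hι _ _).trans (mul_le_of_le_one_right (by positivity) (hf p.2) |>.trans
      (mul_le_of_le_one_right C.2 (he p.1)))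
  refine tensorIdeal_subset hV (fun a ha b hb => ?_) hz
  have hprod : Tendsto (fun p : κ × κ' => (a * e p.1, b * f p.2)) (l ×ˢ l') (𝓝 (a, b)) :=
    ((hS a ha).comp tendsto_fst).prodMk_nhds ((hT b hb).comp tendsto_snd)
  change Tendsto (fun p : κ × κ' => ι (a ⊗ₜ b) * ι (e p.1 ⊗ₜ f p.2)) _ _
  simp only [hX.mul_tmul]
  exact (Φ.continuous₂.tendsto (a, b)).comp hprod

end TensorIdeal

theorem tensorIdeal_inter_tensorIdeal_general {A B X : Type u} [NonUnitalCStarAlgebra A]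
    [NonUnitalCStarAlgebra B] [NonUnitalNormedRing X] [StarRing X] [NormedSpace ℂ X]
    [CompleteSpace X] [IsScalarTower ℂ X X] {ν : A ⊗[ℂ] B → ℝ} {C : ℝ≥0}
    (hν : ∀ a b, ν (a ⊗ₜ b) ≤ C * ‖a‖ * ‖b‖)
    {ι : A ⊗[ℂ] B →ₗ[ℂ] X} (hX : IsTensorCompletion ν X ι)
    (A₁ A₂ : TwoSidedIdeal A) (B₁ B₂ : TwoSidedIdeal B) :
    tensorIdeal ι (A₁ : Set A) (B₁ : Set B) ∩ tensorIdeal ι (A₂ : Set A) (B₂ : Set B) =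
      tensorIdeal ι ((A₁ : Set A) ∩ (A₂ : Set A)) ((B₁ : Set B) ∩ (B₂ : Set B)) := by
  let _ := CStarAlgebra.spectralOrder A
  have _ := CStarAlgebra.spectralOrderedRing A
  let _ := CStarAlgebra.spectralOrder B
  have _ := CStarAlgebra.spectralOrderedRing B
  classical
  refine Set.Subset.antisymm (fun z ⟨hz₁, hz₂⟩ => ?_)
    (Set.subset_inter (tensorIdeal_mono ι Set.inter_subset_left Set.inter_subset_left)
      (tensorIdeal_mono ι Set.inter_subset_right Set.inter_subset_right))
  have htendsto := tendsto_mul_tmul_of_mem_tensorIdeal hX hν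
    (norm_idealApproximateUnit_le_one A₁) (norm_idealApproximateUnit_le_one B₁)
    (fun _ => tendsto_mul_idealApproximateUnit A₁) (fun _ => tendsto_mul_idealApproximateUnit B₁)
    hz₁
  rw [prod_atTop_atTop_eq] at htendsto
  refine isClosed_closure.mem_of_tendsto htendsto (.of_forall fun p => ?_)
  exact mul_tmul_mem_tensorIdeal (S' := A₁ ∩ A₂) (T' := B₁ ∩ B₂) hX
    (fun a ha => ⟨A₁.mul_mem_left _ _ (idealApproximateUnit_mem A₁ p.1), A₂.mul_mem_right _ _ ha⟩)
    (fun b hb => ⟨B₁.mul_mem_left _ _ (idealApproximateUnit_mem B₁ p.2), B₂.mul_mem_right _ _ hb⟩)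
    hz₂


/-- For closed two-sided ideals `A₁, A₂` of `A` and `B₁, B₂` of `B`,
`(A₁ ⊗̂ B₁) ∩ (A₂ ⊗̂ B₂) = (A₁ ∩ A₂) ⊗̂ (B₁ ∩ B₂)` inside `A ⊗̂ B`. -/
theorem tensorIdeal_inter_tensorIdeal {A B X : Type u} [NonUnitalCStarAlgebra A] [NonUnitalCStarAlgebra B]
    [NonUnitalNormedRing X] [StarRing X] [NormedSpace ℂ X] [CompleteSpace X]
    [IsScalarTower ℂ X X] [SMulCommClass ℂ X X]
    (NA : ∀ p : ℕ, Matrix (Fin p) (Fin p) A → ℝ)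
    (NB : ∀ q : ℕ, Matrix (Fin q) (Fin q) B → ℝ)
    (hNA : ∀ p, IsCStarNorm (NA p)) (hNB : ∀ q, IsCStarNorm (NB q))
    (ι : A ⊗[ℂ] B →ₗ[ℂ] X) (hX : IsTensorCompletion (osProjNorm NA NB) X ι)
    (A₁ A₂ : TwoSidedIdeal A) (B₁ B₂ : TwoSidedIdeal B)
    (hA₁ : IsClosed (A₁ : Set A)) (hA₂ : IsClosed (A₂ : Set A))
    (hB₁ : IsClosed (B₁ : Set B)) (hB₂ : IsClosed (B₂ : Set B)) :
    tensorIdeal ι (A₁ : Set A) (B₁ : Set B) ∩ tensorIdeal ι (A₂ : Set A) (B₂ : Set B) =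
      tensorIdeal ι ((A₁ : Set A) ∩ (A₂ : Set A)) ((B₁ : Set B) ∩ (B₂ : Set B)) := by
  exact tensorIdeal_inter_tensorIdeal_general (C := 1)
    (by simpa only [NNReal.coe_one, one_mul] using osProjNorm_tmul_le hNA hNB) hX A₁ A₂ B₁ B₂

end
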